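/- arXiv:2310.07207 — 2 statements merged into one kernel-verified Lean document; each statement's English description precedes it below -/
import Mathlib

section
/- Approximation by the discounted fixed point, optimal case (Proposition 1 for T): for every γ ∈ (0,1), the operator T (with discount γ) has a unique fixed point V*_γ : S → ℝ, and for every x ∈ S, V*_γ(x) tends to V*(x) as γ tends to 1 from within (0,1). -/
/-- Closed-loop trajectory: `traj f π μ x t` is the state at time `t` starting from `x`. -/
def traj {S U A : Type*} (f : S → U → A → S) (π : S → U) (μ : S → A) (x : S) : ℕ → S
  | 0 => x
  | t + 1 =>
    let y := traj f π μ x t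
    f y (π y) (μ y)

/-- Safety value function for a protagonist policy `π` and an adversary policy `μ`. -/
noncomputable def Vpm {S U A : Type*} (f : S → U → A → S) (h : S → ℝ)
    (π : S → U) (μ : S → A) (x : S) : ℝ :=
  ⨅ t : ℕ, h (traj f π μ x t)

/-- Safety value function for a protagonist policy `π` (worst-case adversary). -/
noncomputable def Vp {S U A : Type*} (f : S → U → A → S) (h : S → ℝ)
    (π : S → U) (x : S) : ℝ :=
  ⨅ μ : S → A, Vpm f h π μ x

/-- Optimal safety value function. -/
noncomputable def Vstar {S U A : Type*} (f : S → U → A → S) (h : S → ℝ) (x : S) : ℝ :=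
  ⨆ π : S → U, Vp f h π x

/-- Safety self-consistency operator for fixed protagonist `π` and adversary `μ`. -/
noncomputable def Tpm {S U A : Type*} (γ : ℝ) (f : S → U → A → S) (h : S → ℝ)
    (π : S → U) (μ : S → A) (V : S → ℝ) (x : S) : ℝ :=
  (1 - γ) * h x + γ * min (h x) (V (f x (π x) (μ x)))

/-- Safety self-consistency operator for fixed protagonist `π` (worst-case adversary). -/
noncomputable def Tp {S U A : Type*} (γ : ℝ) (f : S → U → A → S) (h : S → ℝ)
    (π : S → U) (V : S → ℝ) (x : S) : ℝ :=
  (1 - γ) * h x + γ * min (h x) (⨅ a : A, V (f x (π x) a))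

/-- Optimal safety self-consistency operator. -/
noncomputable def Topt {S U A : Type*} (γ : ℝ) (f : S → U → A → S) (h : S → ℝ)
    (V : S → ℝ) (x : S) : ℝ :=
  (1 - γ) * h x + γ * min (h x) (⨆ u : U, ⨅ a : A, V (f x u a))

/-!
Fixing both policies turns the game into a deterministic closed-loop map. A policy `π` that is
greedy for `W` satisfies `Topt W ≤ Tpm π μ W` for every `μ`, and against every `π` a disturbance `μ`
that is greedy for `W` satisfies `Tpm π μ W ≤ Topt W`; so estimates for `Tpm` transfer to `Topt`.

Let `W` be the fixed point of `Topt`. For greedy `μ`, `W` is a supersolution of `Tpm π μ`, while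
`Vpm π μ` is a subsolution because it does not decrease along the trajectory; comparison gives
`Vp π ≤ Vpm π μ ≤ W`. For greedy `π`, unrolling `W ≤ Tpm π μ W` for `t` steps gives
`W x ≤ h (x_t) + (1 - γ ^ t) * C` with `C` the oscillation of `h`. There are only finitely many
closed-loop maps on `S`, so a minimum of `h` along any trajectory is attained by some time `N`
independent of `γ` and of the policies. Altogether `Vstar ≤ W ≤ Vstar + (1 - γ ^ N) * C`.
-/

open Filter Set Topology

section FiniteRange

variable {S ι κ α : Type*} [Finite S]

theorem exists_comp_eq_iInf [ConditionallyCompleteLinearOrder α] [Nonempty ι]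
    (V : S → α) (k : ι → S) : ∃ i, V (k i) = ⨅ j, V (k j) :=
  (range_nonempty _).csInf_mem ((finite_range V).subset (range_comp_subset_range k V))

theorem finite_range_iInf_comp [ConditionallyCompleteLinearOrder α] [Nonempty κ]
    (V : S → α) (k : ι → κ → S) : (range fun i => ⨅ j, V (k i j)).Finite := by
  refine (finite_range V).subset (range_subset_iff.2 fun i => ?_)
  obtain ⟨j, hj⟩ := exists_comp_eq_iInf V (k i)
  exact ⟨k i j, hj⟩

theorem exists_uniform_argmin_iterate [LinearOrder α] (h : S → α) :
    ∃ N : ℕ, ∀ (g : S → S) (x : S), ∃ t ≤ N, ∀ n, h (g^[t] x) ≤ h (g^[n] x) := by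
  have exists_argmin (p : (S → S) × S) : ∃ t, ∀ n, h (p.1^[t] p.2) ≤ h (p.1^[n] p.2) := by
    obtain ⟨_, ⟨t, rfl⟩, ht⟩ := exists_min_image (range fun n => p.1^[n] p.2) h
      (toFinite _) (range_nonempty _)
    exact ⟨t, fun n => ht _ ⟨n, rfl⟩⟩
  choose time time_spec using exists_argmin
  obtain ⟨N, hN⟩ := (finite_range time).bddAbove
  exact ⟨N, fun g x => ⟨time (g, x), hN ⟨_, rfl⟩, time_spec (g, x)⟩⟩

end FiniteRange

/-- Blackwell's sufficient conditions for a contraction, monotonicity and discounting by `γ`,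
merged into one inequality for an operator on real functions. -/
def BlackwellCondition {S : Type*} (γ : ℝ) (T : (S → ℝ) → S → ℝ) : Prop :=
  ∀ ⦃V W : S → ℝ⦄ ⦃c : ℝ⦄, 0 ≤ c → (∀ x, V x ≤ W x + c) → ∀ x, T V x ≤ T W x + γ * c

namespace BlackwellCondition

variable {S : Type*} {γ : ℝ} {T : (S → ℝ) → S → ℝ}

theorem contractingWith [Fintype S] (hT : BlackwellCondition γ T) (hγ₀ : 0 ≤ γ) (hγ₁ : γ < 1) :
    ContractingWith ⟨γ, hγ₀⟩ T := by
  refine ⟨hγ₁, LipschitzWith.of_dist_le_mul fun V W => ?_⟩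
  have apply_sub_le (V W : S → ℝ) (x : S) : T V x - T W x ≤ γ * dist V W := by
    refine sub_le_iff_le_add'.2 (hT dist_nonneg (fun y => ?_) x)
    exact sub_le_iff_le_add'.1 ((Real.sub_le_dist _ _).trans (dist_le_pi_dist V W y))
  refine (dist_pi_le_iff (by positivity)).2 fun x => abs_sub_le_iff.2 ⟨apply_sub_le V W x, ?_⟩
  exact dist_comm V W ▸ apply_sub_le W V x

theorem existsUnique_fixedPoint [Finite S] (hT : BlackwellCondition γ T)
    (hγ₀ : 0 ≤ γ) (hγ₁ : γ < 1) : ∃! W, T W = W := by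
  have := Fintype.ofFinite S
  have contracting := hT.contractingWith hγ₀ hγ₁
  exact ⟨_, contracting.fixedPoint_isFixedPt, fun _ hW => contracting.fixedPoint_unique hW⟩

theorem subsolution_le_supersolution [Finite S] (hT : BlackwellCondition γ T) (hγ₁ : γ < 1)
    {V W : S → ℝ} (hV : V ≤ T V) (hW : T W ≤ W) : V ≤ W := by
  intro x
  have : Nonempty S := ⟨x⟩
  obtain ⟨y, hy⟩ := Finite.exists_max fun z => V z - W z
  suffices V y - W y ≤ 0 by linarith [hy x]
  by_contra! gap_pos
  have gap_le : V y ≤ W y + γ * (V y - W y) := calc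
    V y ≤ T V y := hV y
    _ ≤ T W y + γ * (V y - W y) := hT gap_pos.le (fun z => by linarith [hy z]) y
    _ ≤ W y + γ * (V y - W y) := by gcongr; exact hW y
  nlinarith

end BlackwellCondition

section SafetyGame

variable {S U A : Type*} {γ : ℝ} {f : S → U → A → S} {h : S → ℝ} {π : S → U} {μ : S → A}
  {W : S → ℝ}

/-- One step of the dynamics under the feedback policies `π` and `μ`; trajectories are its
iterates. -/
def closedLoop (f : S → U → A → S) (π : S → U) (μ : S → A) (x : S) : S :=
  f x (π x) (μ x)

theorem traj_eq_iterate (f : S → U → A → S) (π : S → U) (μ : S → A) (x : S) (t : ℕ) :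
    traj f π μ x t = (closedLoop f π μ)^[t] x := by
  induction t with
  | zero => rfl
  | succ t ih => rw [Function.iterate_succ_apply', ← ih]; rfl

theorem Vpm_eq_iInf_iterate (f : S → U → A → S) (h : S → ℝ) (π : S → U) (μ : S → A) (x : S) :
    Vpm f h π μ x = ⨅ t : ℕ, h ((closedLoop f π μ)^[t] x) := by
  simp only [Vpm, traj_eq_iterate]

theorem Vpm_le_iterate (hh : BddBelow (range h)) (x : S) (t : ℕ) :
    Vpm f h π μ x ≤ h ((closedLoop f π μ)^[t] x) := by
  rw [Vpm_eq_iInf_iterate]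
  exact ciInf_le (hh.mono (range_comp_subset_range _ h)) t

theorem Vpm_le_Vpm_closedLoop (hh : BddBelow (range h)) (x : S) :
    Vpm f h π μ x ≤ Vpm f h π μ (closedLoop f π μ x) := by
  rw [Vpm_eq_iInf_iterate f h π μ (closedLoop f π μ x)]
  exact le_ciInf fun t => Vpm_le_iterate hh x (t + 1)

theorem Vp_le_Vpm (hh : BddBelow (range h)) (x : S) : Vp f h π x ≤ Vpm f h π μ x := by
  obtain ⟨m, hm⟩ := hh
  exact ciInf_le ⟨m, forall_mem_range.2 fun _ => le_ciInf fun _ => hm ⟨_, rfl⟩⟩ μ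

theorem Vp_le_Vstar [Nonempty A] (hh : BddBelow (range h)) (x : S) :
    Vp f h π x ≤ Vstar f h x := by
  refine le_ciSup (f := fun π => Vp f h π x) ⟨h x, forall_mem_range.2 fun π => ?_⟩ π
  exact (Vp_le_Vpm (μ := Classical.arbitrary _) hh x).trans (Vpm_le_iterate hh x 0)

theorem blackwellCondition_Tpm (hγ₀ : 0 ≤ γ) (f : S → U → A → S) (h : S → ℝ) (π : S → U)
    (μ : S → A) : BlackwellCondition γ (Tpm γ f h π μ) := by
  intro V W c hc hVW x
  have min_le_min_add : min (h x) (V (closedLoop f π μ x)) ≤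
      min (h x) (W (closedLoop f π μ x)) + c := by
    rw [← min_add_add_right]
    exact min_le_min (le_add_of_nonneg_right hc) (hVW _)
  calc
    Tpm γ f h π μ V x ≤ (1 - γ) * h x + γ * (min (h x) (W (closedLoop f π μ x)) + c) := by
      unfold Tpm
      gcongr
      exact min_le_min_add
    _ = Tpm γ f h π μ W x + γ * c := by
      simp only [Tpm, closedLoop]
      ring

theorem exists_forall_Topt_le_Tpm [Finite S] [Nonempty U] [Nonempty A] (hγ₀ : 0 ≤ γ)
    (f : S → U → A → S) (h W : S → ℝ) : ∃ π, ∀ μ, Topt γ f h W ≤ Tpm γ f h π μ W := by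
  have exists_greedy (x : S) : ∃ u, ⨅ a, W (f x u a) = ⨆ u, ⨅ a, W (f x u a) :=
    (range_nonempty _).csSup_mem (finite_range_iInf_comp W (f x))
  choose π hπ using exists_greedy
  refine ⟨π, fun μ x => ?_⟩
  have worst_le : ⨅ a, W (f x (π x) a) ≤ W (f x (π x) (μ x)) :=
    ciInf_le ((finite_range W).bddBelow.mono (range_comp_subset_range _ W)) (μ x)
  rw [Topt, Tpm, ← hπ x]
  gcongr

theorem exists_Tpm_le_Topt [Finite S] [Nonempty A] (hγ₀ : 0 ≤ γ)
    (f : S → U → A → S) (h W : S → ℝ) (π : S → U) : ∃ μ, Tpm γ f h π μ W ≤ Topt γ f h W := by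
  choose μ hμ using fun x => exists_comp_eq_iInf W (f x (π x))
  refine ⟨μ, fun x => ?_⟩
  have le_best : W (f x (π x) (μ x)) ≤ ⨆ u, ⨅ a, W (f x u a) :=
    (hμ x).trans_le (le_ciSup (finite_range_iInf_comp W (f x)).bddAbove (π x))
  rw [Tpm, Topt]
  gcongr

theorem blackwellCondition_Topt [Finite S] [Nonempty U] [Nonempty A] (hγ₀ : 0 ≤ γ)
    (f : S → U → A → S) (h : S → ℝ) : BlackwellCondition γ (Topt γ f h) := by
  intro V W c hc hVW x
  obtain ⟨π, hπ⟩ := exists_forall_Topt_le_Tpm hγ₀ f h V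
  obtain ⟨μ, hμ⟩ := exists_Tpm_le_Topt hγ₀ f h W π
  calc
    Topt γ f h V x ≤ Tpm γ f h π μ V x := hπ μ x
    _ ≤ Tpm γ f h π μ W x + γ * c := blackwellCondition_Tpm hγ₀ f h π μ hc hVW x
    _ ≤ Topt γ f h W x + γ * c := by gcongr; exact hμ x

theorem Vpm_le_Tpm_Vpm (hγ₀ : 0 ≤ γ) (hγ₁ : γ ≤ 1) (hh : BddBelow (range h)) :
    Vpm f h π μ ≤ Tpm γ f h π μ (Vpm f h π μ) := by
  intro x
  have le_h : Vpm f h π μ x ≤ h x := Vpm_le_iterate hh x 0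
  have le_min_next : Vpm f h π μ x ≤ min (h x) (Vpm f h π μ (closedLoop f π μ x)) :=
    le_min le_h (Vpm_le_Vpm_closedLoop hh x)
  calc
    Vpm f h π μ x = (1 - γ) * Vpm f h π μ x + γ * Vpm f h π μ x := by ring
    _ ≤ (1 - γ) * h x + γ * min (h x) (Vpm f h π μ (closedLoop f π μ x)) :=
      add_le_add (mul_le_mul_of_nonneg_left le_h (sub_nonneg.2 hγ₁))
        (mul_le_mul_of_nonneg_left le_min_next hγ₀)

theorem Vstar_le_of_Topt_le [Finite S] [Nonempty U] [Nonempty A] (hγ₀ : 0 ≤ γ) (hγ₁ : γ < 1)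
    (hW : Topt γ f h W ≤ W) : Vstar f h ≤ W := by
  intro x
  refine ciSup_le fun π => ?_
  obtain ⟨μ, hμ⟩ := exists_Tpm_le_Topt hγ₀ f h W π
  have hh : BddBelow (range h) := (finite_range h).bddBelow
  calc
    Vp f h π x ≤ Vpm f h π μ x := Vp_le_Vpm hh x
    _ ≤ W x := (blackwellCondition_Tpm hγ₀ f h π μ).subsolution_le_supersolution hγ₁
      (Vpm_le_Tpm_Vpm hγ₀ hγ₁.le hh) (hμ.trans hW) x

theorem le_iterate_add_of_le_Tpm (hγ₀ : 0 ≤ γ) (hγ₁ : γ ≤ 1) {C : ℝ}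
    (hC : ∀ x y, h x ≤ h y + C) (hW : W ≤ Tpm γ f h π μ W) (t : ℕ) (x : S) :
    W x ≤ h ((closedLoop f π μ)^[t] x) + (1 - γ ^ t) * C := by
  induction t generalizing x with
  | zero =>
    calc
      W x ≤ (1 - γ) * h x + γ * min (h x) (W (closedLoop f π μ x)) := hW x
      _ ≤ (1 - γ) * h x + γ * h x := by gcongr; exact min_le_left _ _
      _ = h ((closedLoop f π μ)^[0] x) + (1 - γ ^ 0) * C := by
        rw [Function.iterate_zero_apply]
        ring
  | succ t ih =>
    rw [Function.iterate_succ_apply]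
    set y := closedLoop f π μ x
    set z := (closedLoop f π μ)^[t] y
    calc
      W x ≤ (1 - γ) * h x + γ * min (h x) (W y) := hW x
      _ ≤ (1 - γ) * (h z + C) + γ * (h z + (1 - γ ^ t) * C) :=
        add_le_add (mul_le_mul_of_nonneg_left (hC x z) (sub_nonneg.2 hγ₁))
          (mul_le_mul_of_nonneg_left ((min_le_right _ _).trans (ih y)) hγ₀)
      _ = h z + (1 - γ ^ (t + 1)) * C := by ring

theorem exists_forall_le_Vstar_add [Finite S] [Nonempty U] [Nonempty A]
    (f : S → U → A → S) (h : S → ℝ) :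
    ∃ (N : ℕ) (C : ℝ), ∀ γ ∈ Icc (0 : ℝ) 1, ∀ W, W ≤ Topt γ f h W →
      ∀ x, W x ≤ Vstar f h x + (1 - γ ^ N) * C := by
  obtain ⟨N, hN⟩ := exists_uniform_argmin_iterate h
  obtain ⟨C, hC⟩ := (finite_range fun p : S × S => h p.1 - h p.2).bddAbove
  have osc_le (x y : S) : h x ≤ h y + C := sub_le_iff_le_add'.1 (hC ⟨(x, y), rfl⟩)
  refine ⟨N, C, fun γ hγ W hW x => ?_⟩
  obtain ⟨hγ₀, hγ₁⟩ := hγ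
  have C_nonneg : 0 ≤ C := by linarith [osc_le x x]
  obtain ⟨π, hπ⟩ := exists_forall_Topt_le_Tpm hγ₀ f h W
  have le_Vpm_add (μ : S → A) : W x ≤ Vpm f h π μ x + (1 - γ ^ N) * C := by
    obtain ⟨t, htN, ht⟩ := hN (closedLoop f π μ) x
    have argmin_le : h ((closedLoop f π μ)^[t] x) ≤ Vpm f h π μ x := by
      rw [Vpm_eq_iInf_iterate]
      exact le_ciInf ht
    calc
      W x ≤ h ((closedLoop f π μ)^[t] x) + (1 - γ ^ t) * C :=
        le_iterate_add_of_le_Tpm hγ₀ hγ₁ osc_le (hW.trans (hπ μ)) t x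
      _ ≤ Vpm f h π μ x + (1 - γ ^ N) * C := by
        gcongr ?_ + (1 - ?_) * C
        exact pow_le_pow_of_le_one hγ₀ hγ₁ htN
  have le_Vp : W x - (1 - γ ^ N) * C ≤ Vp f h π x :=
    le_ciInf fun μ => sub_le_iff_le_add.2 (le_Vpm_add μ)
  exact sub_le_iff_le_add.1 (le_Vp.trans (Vp_le_Vstar (finite_range h).bddBelow x))

theorem tendsto_fixedPoint_Vstar [Finite S] [Nonempty U] [Nonempty A] {Vγ : ℝ → S → ℝ}
    (hV : ∀ γ ∈ Ioo (0 : ℝ) 1, Topt γ f h (Vγ γ) = Vγ γ) (x : S) :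
    Tendsto (fun γ => Vγ γ x) (𝓝[Ioo 0 1] 1) (𝓝 (Vstar f h x)) := by
  obtain ⟨N, C, upper⟩ := exists_forall_le_Vstar_add f h
  have error_tendsto : Tendsto (fun γ : ℝ => Vstar f h x + (1 - γ ^ N) * C) (𝓝[Ioo 0 1] 1)
      (𝓝 (Vstar f h x)) :=
    (Continuous.tendsto' (by fun_prop) _ _ (by simp)).mono_left nhdsWithin_le_nhds
  refine tendsto_of_tendsto_of_tendsto_of_le_of_le' tendsto_const_nhds error_tendsto ?_ ?_
  · filter_upwards [self_mem_nhdsWithin] with γ hγ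
    exact Vstar_le_of_Topt_le hγ.1.le hγ.2 (hV γ hγ).le x
  · filter_upwards [self_mem_nhdsWithin] with γ hγ
    exact upper γ (Ioo_subset_Icc_self hγ) _ (hV γ hγ).ge x

end SafetyGame

theorem discounted_approximation_optimal_general {S U A : Type*} [Finite S] [Nonempty U]
    [Nonempty A] (f : S → U → A → S) (h : S → ℝ) :
    (∀ γ ∈ Ioo (0 : ℝ) 1, ∃! W : S → ℝ, Topt γ f h W = W) ∧
    (∀ Vγ : ℝ → S → ℝ, (∀ γ ∈ Ioo (0 : ℝ) 1, Topt γ f h (Vγ γ) = Vγ γ) →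
      ∀ x : S, Tendsto (fun γ => Vγ γ x) (𝓝[Ioo 0 1] 1) (𝓝 (Vstar f h x))) :=
  ⟨fun _ hγ => (blackwellCondition_Topt hγ.1.le f h).existsUnique_fixedPoint hγ.1.le hγ.2,
    fun _ hV => tendsto_fixedPoint_Vstar hV⟩

theorem discounted_approximation_optimal {S U A : Type*} [Fintype S] [Nonempty S] [Fintype U] [Nonempty U] [Fintype A] [Nonempty A]
    (f : S → U → A → S) (h : S → ℝ) :
    (∀ γ ∈ Set.Ioo (0 : ℝ) 1, ∃! W : S → ℝ, Topt γ f h W = W) ∧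
    (∀ Vγ : ℝ → S → ℝ, (∀ γ ∈ Set.Ioo (0 : ℝ) 1, Topt γ f h (Vγ γ) = Vγ γ) →
      ∀ x : S, Filter.Tendsto (fun γ => Vγ γ x) (nhdsWithin 1 (Set.Ioo (0 : ℝ) 1))
        (nhds (Vstar f h x))) :=
  discounted_approximation_optimal_general f h
end

section
/- Robust forward invariance of the robust invariant set: for every feedback policy π : S → U and every state x ∈ S with V^π(x) ≥ 0, one has h(x) ≥ 0 and, for every disturbance a ∈ A, V^π(f(x, π(x), a)) ≥ 0; that is, from any state of the robust invariant set S_r^π = { x | V^π(x) ≥ 0 }, the policy π keeps the next state inside S_r^π under every disturbance, and the current state is safe. -/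
/-!
Disturbance policies are stationary, so playing `a` now and following `μ` afterwards is not itself a
policy when the trajectory comes back to `x`. Still, every state that this play visits is visited
from `x` under a stationary policy: if the trajectory of `μ` from the successor has already returned
to `x`, follow `μ` from that return on; otherwise redefining `μ` at `x` to be `a` changes nothing
along the way. Hence the infimum defining `V^π` at the successor is over values of `h` that already
occur in the infimum at `x`.
-/

section Trajectory

variable {S U A : Type*} (f : S → U → A → S) (π : S → U)

theorem traj_add (μ : S → A) (x : S) (s t : ℕ) :
    traj f π μ x (s + t) = traj f π μ (traj f π μ x s) t := by
  induction t with
  | zero => rfl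
  | succ t ih => rw [← Nat.add_assoc, traj, traj, ih]

theorem traj_succ' (μ : S → A) (x : S) (t : ℕ) :
    traj f π μ x (t + 1) = traj f π μ (f x (π x) (μ x)) t := by
  rw [Nat.add_comm, traj_add]
  rfl

variable {f π}

theorem traj_congr {μ ν : S → A} {x : S} {t : ℕ}
    (hμν : ∀ s < t, μ (traj f π ν x s) = ν (traj f π ν x s)) :
    traj f π μ x t = traj f π ν x t := by
  induction t with
  | zero => rfl
  | succ t ih =>
    rw [traj, traj, ih fun s hs => hμν s (hs.trans t.lt_succ_self), hμν t t.lt_succ_self]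

theorem traj_update_succ [DecidableEq S] {μ : S → A} {x : S} {a : A} {t : ℕ}
    (hx : ∀ s < t, traj f π μ (f x (π x) a) s ≠ x) :
    traj f π (Function.update μ x a) x (t + 1) = traj f π μ (f x (π x) a) t := by
  rw [traj_succ', Function.update_self]
  exact traj_congr fun s hs => Function.update_of_ne (hx s hs) a μ

variable (f π)

theorem exists_traj_eq_traj_step (μ : S → A) (x : S) (a : A) (t : ℕ) :
    ∃ (ν : S → A) (s : ℕ), traj f π ν x s = traj f π μ (f x (π x) a) t := by
  classical
  by_cases hreturn : ∃ s < t, traj f π μ (f x (π x) a) s = x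
  · obtain ⟨s, hst, hs⟩ := hreturn
    obtain ⟨r, rfl⟩ := Nat.exists_eq_add_of_le hst.le
    exact ⟨μ, r, by rw [traj_add, hs]⟩
  · push Not at hreturn
    exact ⟨Function.update μ x a, t + 1, traj_update_succ hreturn⟩

end Trajectory

section Value

variable {S U A : Type*} (f : S → U → A → S) {h : S → ℝ} (π : S → U)

theorem Vpm_le_apply_traj (hh : BddBelow (Set.range h)) (μ : S → A) (x : S) (t : ℕ) :
    Vpm f h π μ x ≤ h (traj f π μ x t) :=
  ciInf_le (hh.mono (Set.range_comp_subset_range _ h)) t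

theorem bddBelow_range_Vpm (hh : BddBelow (Set.range h)) (x : S) :
    BddBelow (Set.range fun μ : S → A => Vpm f h π μ x) := by
  obtain ⟨b, hb⟩ := hh
  refine ⟨b, ?_⟩
  rintro _ ⟨μ, rfl⟩
  exact le_ciInf fun t => hb (Set.mem_range_self _)

theorem Vp_le_apply_traj (hh : BddBelow (Set.range h)) (μ : S → A) (x : S) (t : ℕ) :
    Vp f h π x ≤ h (traj f π μ x t) :=
  (ciInf_le (bddBelow_range_Vpm f π hh x) μ).trans (Vpm_le_apply_traj f π hh μ x t)

variable {f π}

theorem le_Vp [Nonempty A] {x : S} {c : ℝ} (hc : ∀ (μ : S → A) (t : ℕ), c ≤ h (traj f π μ x t)) :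
    c ≤ Vp f h π x :=
  le_ciInf fun μ => le_ciInf (hc μ)

variable (f π)

theorem Vp_le_apply [Nonempty A] (hh : BddBelow (Set.range h)) (x : S) : Vp f h π x ≤ h x :=
  Vp_le_apply_traj f π hh (fun _ => Classical.arbitrary A) x 0

theorem Vp_le_Vp_step (hh : BddBelow (Set.range h)) (x : S) (a : A) :
    Vp f h π x ≤ Vp f h π (f x (π x) a) := by
  have : Nonempty A := ⟨a⟩
  refine le_Vp fun μ t => ?_
  obtain ⟨ν, s, hν⟩ := exists_traj_eq_traj_step f π μ x a t
  calc Vp f h π x ≤ h (traj f π ν x s) := Vp_le_apply_traj f π hh ν x s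
    _ = h (traj f π μ (f x (π x) a) t) := by rw [hν]

end Value

theorem robust_forward_invariance_general {S U A : Type*} [Nonempty A] (f : S → U → A → S)
    {h : S → ℝ} (hh : BddBelow (Set.range h)) (π : S → U) (x : S) {c : ℝ}
    (hx : c ≤ Vp f h π x) :
    c ≤ h x ∧ ∀ a : A, c ≤ Vp f h π (f x (π x) a) :=
  ⟨hx.trans (Vp_le_apply f π hh x), fun a => hx.trans (Vp_le_Vp_step f π hh x a)⟩

theorem robust_forward_invariance {S U A : Type*} [Fintype S] [Nonempty S] [Fintype U] [Nonempty U] [Fintype A] [Nonempty A]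
    (f : S → U → A → S) (h : S → ℝ)
    (π : S → U) (x : S) (hx : 0 ≤ Vp f h π x) :
    0 ≤ h x ∧ ∀ a : A, 0 ≤ Vp f h π (f x (π x) a) :=
  robust_forward_invariance_general f (Set.finite_range h).bddBelow π x hx
end
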